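/- Let n ≥ 1 and let A, A̲, Ā be n×n real symmetric matrices with A̲ᵢⱼ ≤ Aᵢⱼ ≤ Āᵢⱼ for all entries (i, j). Define the radius matrix ΔA with entries ΔAᵢⱼ = (Āᵢⱼ − A̲ᵢⱼ)/2, the modified radius matrix Δ̃A which equals ΔA off the diagonal and has zero diagonal, the midpoint matrix A_M with entries (Āᵢⱼ + A̲ᵢⱼ)/2, and the modified midpoint matrix Ã_M which equals A_M off the diagonal and has diagonal entries A̲ᵢᵢ. Then for every n×n real symmetric matrix E, λ_min(A) ≥ λ_min(Ã_M + E) − ρ(Δ̃A + |E|), where |E| is the matrix of absolute values |Eᵢⱼ|, λ_min denotes the smallest eigenvalue, and ρ denotes the spectral radius. -/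

import Mathlib

/-!
The smallest eigenvalue of a symmetric matrix is compared with quadratic forms. If `A v = μ v` with
`v ≠ 0`, then splitting `A = (Ã_M + E) + (A - Ã_M - E)` gives
`μ ⟨v, v⟩ = ⟨v, (Ã_M + E) v⟩ + ⟨v, (A - Ã_M - E) v⟩`. The first term is at least
`λ_min(Ã_M + E) ⟨v, v⟩` (`minEigenvalue_mul_le`). In the second term every summand is at least
`-(Δ̃A + |E|)ᵢⱼ |vᵢ| |vⱼ|`: off the diagonal since `|Aᵢⱼ - (Ã_M)ᵢⱼ| ≤ Δ̃Aᵢⱼ`, on the diagonal since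
`Aᵢᵢ - A̲ᵢᵢ ≥ 0`. So it is at least `-⟨|v|, (Δ̃A + |E|) |v|⟩ ≥ -ρ(Δ̃A + |E|) ⟨v, v⟩`
(`le_spectralRad_mul`). Dividing by `⟨v, v⟩ > 0` bounds every eigenvalue `μ` of `A`.
-/

/-- The smallest eigenvalue of a real (symmetric) matrix, as the infimum of its
real spectrum. -/
noncomputable def minEigenvalue {n : ℕ} (A : Matrix (Fin n) (Fin n) ℝ) : ℝ :=
  sInf (spectrum ℝ A)

/-- The spectral radius of a real (symmetric) matrix: the maximum absolute
value of its real spectrum. -/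
noncomputable def spectralRad {n : ℕ} (A : Matrix (Fin n) (Fin n) ℝ) : ℝ :=
  sSup (abs '' spectrum ℝ A)

/-- The modified midpoint matrix `Ã_M` of an interval matrix `[A̲, Ā]`: it
equals the midpoint matrix `(Ā + A̲)/2` off the diagonal and has diagonal
entries `A̲ᵢᵢ`. -/
noncomputable def modifiedMidpoint {n : ℕ} (Alo Ahi : Matrix (Fin n) (Fin n) ℝ) :
    Matrix (Fin n) (Fin n) ℝ :=
  Matrix.of fun i j => if i = j then Alo i i else (Ahi i j + Alo i j) / 2

/-- The modified radius matrix `Δ̃A` of an interval matrix `[A̲, Ā]`: it equals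
the radius matrix `(Ā - A̲)/2` off the diagonal and has zero diagonal. -/
noncomputable def modifiedRadius {n : ℕ} (Alo Ahi : Matrix (Fin n) (Fin n) ℝ) :
    Matrix (Fin n) (Fin n) ℝ :=
  Matrix.of fun i j => if i = j then 0 else (Ahi i j - Alo i j) / 2

/-- The entrywise absolute value of a matrix. -/
def matAbs {n : ℕ} (E : Matrix (Fin n) (Fin n) ℝ) : Matrix (Fin n) (Fin n) ℝ :=
  Matrix.of fun i j => |E i j|

open Matrix in
/-- A lower bound for the spectrum of a symmetric matrix is a lower bound for its Rayleigh
quotients. -/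
lemma mul_dotProduct_le_of_spectrum {n : ℕ} {M : Matrix (Fin n) (Fin n) ℝ} (hM : M.IsSymm) {c : ℝ}
    (hc : ∀ μ ∈ spectrum ℝ M, c ≤ μ) (v : Fin n → ℝ) : c * (v ⬝ᵥ v) ≤ v ⬝ᵥ (M *ᵥ v) := by
  have hsymm : (M - algebraMap ℝ _ c).IsHermitian := by
    rw [Matrix.IsHermitian, conjTranspose_eq_transpose_of_trivial, transpose_sub, hM.eq,
      algebraMap_eq_diagonal, diagonal_transpose]
  have hpsd : (M - algebraMap ℝ _ c).PosSemidef := by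
    refine posSemidef_iff_isHermitian_and_spectrum_nonneg.2 ⟨hsymm, fun x hx => ?_⟩
    rw [← spectrum.sub_singleton_eq, Set.mem_sub] at hx
    obtain ⟨μ, hμ, d, rfl, rfl⟩ := hx
    exact sub_nonneg.2 (hc μ hμ)
  have h := hpsd.dotProduct_mulVec_nonneg v
  rw [star_trivial, sub_mulVec, dotProduct_sub, Algebra.algebraMap_eq_smul_one, smul_mulVec,
    one_mulVec, dotProduct_smul, smul_eq_mul] at h
  linarith

open Matrix in
lemma minEigenvalue_mul_le {n : ℕ} {M : Matrix (Fin n) (Fin n) ℝ} (hM : M.IsSymm)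
    (v : Fin n → ℝ) : minEigenvalue M * (v ⬝ᵥ v) ≤ v ⬝ᵥ (M *ᵥ v) :=
  mul_dotProduct_le_of_spectrum hM
    (fun _ hμ => csInf_le M.finite_real_spectrum.bddBelow hμ) v

open Matrix in
lemma le_spectralRad_mul {n : ℕ} {M : Matrix (Fin n) (Fin n) ℝ} (hM : M.IsSymm)
    (v : Fin n → ℝ) : v ⬝ᵥ (M *ᵥ v) ≤ spectralRad M * (v ⬝ᵥ v) := by
  have h := mul_dotProduct_le_of_spectrum (M := -M) (c := -spectralRad M) hM.neg
    (fun μ hμ => ?_) v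
  · rw [neg_mulVec, dotProduct_neg] at h
    linarith
  · rw [← spectrum.neg_eq, Set.mem_neg] at hμ
    have h1 : |-μ| ≤ spectralRad M :=
      le_csSup (M.finite_real_spectrum.image _).bddAbove (Set.mem_image_of_mem _ hμ)
    linarith [le_abs_self (-μ)]

lemma modifiedMidpoint_isSymm {n : ℕ} {Alo Ahi : Matrix (Fin n) (Fin n) ℝ}
    (hAlo : Alo.IsSymm) (hAhi : Ahi.IsSymm) : (modifiedMidpoint Alo Ahi).IsSymm := by
  refine Matrix.IsSymm.ext fun i j => ?_
  by_cases h : i = j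
  · subst h; rfl
  · simp [modifiedMidpoint, h, Ne.symm h, hAlo.apply i j, hAhi.apply i j]

lemma modifiedRadius_isSymm {n : ℕ} {Alo Ahi : Matrix (Fin n) (Fin n) ℝ}
    (hAlo : Alo.IsSymm) (hAhi : Ahi.IsSymm) : (modifiedRadius Alo Ahi).IsSymm := by
  refine Matrix.IsSymm.ext fun i j => ?_
  by_cases h : i = j
  · subst h; rfl
  · simp [modifiedRadius, h, Ne.symm h, hAlo.apply i j, hAhi.apply i j]

lemma matAbs_isSymm {n : ℕ} {E : Matrix (Fin n) (Fin n) ℝ} (hE : E.IsSymm) :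
    (matAbs E).IsSymm :=
  Matrix.IsSymm.ext fun i j => by simp [matAbs, hE.apply i j]

/-- The quadratic form of `A - Ã_M - E` at `v` is at least minus that of `Δ̃A + |E|` at `|v|`,
summand by summand. -/
lemma entry_bound {n : ℕ} {A Alo Ahi : Matrix (Fin n) (Fin n) ℝ}
    (hbounds : ∀ i j, Alo i j ≤ A i j ∧ A i j ≤ Ahi i j)
    (E : Matrix (Fin n) (Fin n) ℝ) (v : Fin n → ℝ) (i j : Fin n) :
    v i * ((modifiedMidpoint Alo Ahi + E) i j * v j)
      - |v i| * ((modifiedRadius Alo Ahi + matAbs E) i j * |v j|) ≤ v i * (A i j * v j) := by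
  obtain ⟨h1, h2⟩ := hbounds i j
  by_cases h : i = j
  · subst h
    simp only [modifiedMidpoint, modifiedRadius, matAbs, Matrix.add_apply, Matrix.of_apply,
      if_true]
    have h3 : |v i| * |v i| = v i * v i := abs_mul_abs_self _
    have h4 : v i * v i * (Alo i i + E i i - |E i i|) ≤ v i * v i * A i i :=
      mul_le_mul_of_nonneg_left (by linarith [le_abs_self (E i i)]) (mul_self_nonneg _)
    linear_combination h4 - |E i i| * h3
  · simp only [modifiedMidpoint, modifiedRadius, matAbs, Matrix.add_apply, Matrix.of_apply, h,
      if_false]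
    have h3 : |(Ahi i j + Alo i j) / 2 + E i j - A i j| ≤ (Ahi i j - Alo i j) / 2 + |E i j| := by
      rw [abs_le]
      constructor <;> linarith [le_abs_self (E i j), neg_abs_le (E i j)]
    have h4 := le_abs_self (v i * v j * ((Ahi i j + Alo i j) / 2 + E i j - A i j))
    rw [abs_mul, abs_mul] at h4
    have h5 := mul_le_mul_of_nonneg_left h3 (mul_nonneg (abs_nonneg (v i)) (abs_nonneg (v j)))
    linear_combination h4 + h5

/-- **E-matrix bound for symmetric interval matrices (EM method, Eq. (18)).**
Let `A`, `A̲`, `Ā` be `n×n` real symmetric matrices with entrywise bounds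
`A̲ᵢⱼ ≤ Aᵢⱼ ≤ Āᵢⱼ`. Then for every `n×n` real symmetric matrix `E`,
`λ_min(A) ≥ λ_min(Ã_M + E) - ρ(Δ̃A + |E|)`. -/
theorem e_matrix_min_eigenvalue_bound (n : ℕ) (hn : 0 < n)
    (A Alo Ahi : Matrix (Fin n) (Fin n) ℝ)
    (hA : A.IsSymm) (hAlo : Alo.IsSymm) (hAhi : Ahi.IsSymm)
    (hbounds : ∀ i j, Alo i j ≤ A i j ∧ A i j ≤ Ahi i j)
    (E : Matrix (Fin n) (Fin n) ℝ) (hE : E.IsSymm) :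
    minEigenvalue (modifiedMidpoint Alo Ahi + E)
      - spectralRad (modifiedRadius Alo Ahi + matAbs E)
      ≤ minEigenvalue A := by
  have hH : A.IsHermitian := by
    rw [Matrix.IsHermitian, Matrix.conjTranspose_eq_transpose_of_trivial, hA.eq]
  have : Nonempty (Fin n) := ⟨⟨0, hn⟩⟩
  refine le_csInf ⟨_, hH.eigenvalues_mem_spectrum_real ⟨0, hn⟩⟩ fun μ hμ => ?_
  rw [← Matrix.spectrum_toLin', ← Module.End.hasEigenvalue_iff_mem_spectrum] at hμ
  obtain ⟨v, hv⟩ := hμ.exists_hasEigenvector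
  have hAv : A.mulVec v = μ • v := by simpa using hv.apply_eq_smul
  have hpos : 0 < v ⬝ᵥ v :=
    lt_of_le_of_ne (Finset.sum_nonneg fun i _ => mul_self_nonneg (v i))
      fun h => hv.2 (dotProduct_self_eq_zero.1 h.symm)
  have h1 := minEigenvalue_mul_le ((modifiedMidpoint_isSymm hAlo hAhi).add hE) v
  have h2 := le_spectralRad_mul ((modifiedRadius_isSymm hAlo hAhi).add (matAbs_isSymm hE))
    (fun i => |v i|)
  have h3 : (fun i => |v i|) ⬝ᵥ (fun i => |v i|) = v ⬝ᵥ v := by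
    simp [dotProduct]
  have h4 : v ⬝ᵥ (modifiedMidpoint Alo Ahi + E).mulVec v
      - (fun i => |v i|) ⬝ᵥ (modifiedRadius Alo Ahi + matAbs E).mulVec (fun i => |v i|)
      ≤ v ⬝ᵥ A.mulVec v := by
    simp only [dotProduct, Matrix.mulVec, Finset.mul_sum, ← Finset.sum_sub_distrib]
    exact Finset.sum_le_sum fun i _ => Finset.sum_le_sum fun j _ => entry_bound hbounds E v i j
  rw [hAv, dotProduct_smul, smul_eq_mul] at h4
  rw [h3] at h2
  refine le_of_mul_le_mul_right ?_ hpos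
  linarith
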